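/- Let u(x) = (x₁ + i x₂)/|x₁ + i x₂| for x = (x₁,x₂) ∈ ℝ² ∖ {0}. For all y₁, y₂ ∈ ℝ², the function x ↦ (1 − u(x)·conj(u(y₁+x)))·(1 − u(y₁+x)·conj(u(y₂+x)))·(1 − u(y₂+x)·conj(u(x))) is Lebesgue integrable on ℝ², and ∫_{ℝ²} (1 − u(x)conj(u(y₁+x)))(1 − u(y₁+x)conj(u(y₂+x)))(1 − u(y₂+x)conj(u(x))) dx = 2πi·(y₁ ∧ y₂), where y ∧ z = y₁z₂ − y₂z₁. -/

import Mathlib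

open MeasureTheory

noncomputable def zc (x : ℝ × ℝ) : ℂ := (x.1 : ℂ) + (x.2 : ℂ) * Complex.I

noncomputable def an (v w : ℂ) : ℝ := Complex.arg (w * (starRingEnd ℂ) v)

noncomputable def gs (a : ℝ) : ℝ := a - Real.sin a

lemma zc_re (x) : (zc x).re = x.1 := by simp [zc]
lemma zc_im (x) : (zc x).im = x.2 := by simp [zc]
lemma zc_add (x y) : zc (x + y) = zc x + zc y := by
  apply Complex.ext <;> simp [zc_re, zc_im]
lemma zc_neg (x) : zc (-x) = - zc x := by
  apply Complex.ext <;> simp [zc_re, zc_im]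
lemma zc_eq_zero {x} : zc x = 0 ↔ x = 0 := by
  rw [Complex.ext_iff, Prod.ext_iff]; simp [zc_re, zc_im]
lemma zc_meas : Measurable zc := by unfold zc; fun_prop
lemma norm_le_zc (x : ℝ × ℝ) : ‖x‖ ≤ ‖zc x‖ := by
  rw [Prod.norm_def]
  apply max_le
  · simpa [zc_re] using Complex.abs_re_le_norm (zc x)
  · simpa [zc_im] using Complex.abs_im_le_norm (zc x)

lemma gs_bound (a : ℝ) : |gs a| ≤ |a| ^ 3 := by
  have key : ∀ a : ℝ, 0 ≤ a → |gs a| ≤ a ^ 3 := by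
    intro a ha
    unfold gs
    have h1 := Real.sin_le ha
    rw [abs_of_nonneg (by linarith)]
    rcases ha.eq_or_lt with h0 | h0
    · simp [← h0]
    rcases le_or_gt a 1 with h | h
    · have := Real.sin_gt_sub_cube h0 
      have h3 : 0 < a ^ 3 := by positivity
      linarith
    · by_cases h4 : a ≤ 2
      · have : 0 ≤ Real.sin a := Real.sin_nonneg_of_nonneg_of_le_pi ha (by linarith [Real.pi_gt_three])
        nlinarith [mul_pos h0 h0]
      · have := Real.neg_one_le_sin a
        nlinarith [mul_pos h0 h0]
  rcases le_total 0 a with h | h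
  · rw [abs_of_nonneg h]; exact key a h
  · have := key (-a) (by linarith)
    rw [abs_of_nonpos h]
    have e : gs a = - gs (-a) := by unfold gs; rw [Real.sin_neg]; ring
    rw [e, abs_neg]; exact this

lemma gs_bound' (a : ℝ) (h : |a| ≤ Real.pi) : |gs a| ≤ 5 := by
  have h1 := Real.abs_sin_le_one a
  have h2 := Real.pi_lt_four
  unfold gs
  have := abs_sub a (Real.sin a)
  linarith

lemma an_bound (v y : ℂ) (h : 2 * ‖y‖ < ‖v‖) : |an v (v + y)| ≤ Real.pi * ‖y‖ / ‖v‖ := by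
  have hv : 0 < ‖v‖ := lt_of_le_of_lt (by positivity) h
  have hw : ‖v‖ / 2 ≤ ‖v + y‖ := by
    have := norm_sub_norm_le v (-y)
    simp only [norm_neg, sub_neg_eq_add] at this
    linarith
  have hw0 : 0 < ‖v + y‖ := by linarith
  set p := (v + y) * (starRingEnd ℂ) v with hp
  have hpe : p = (‖v‖ ^ 2 : ℝ) + y * (starRingEnd ℂ) v := by
    rw [hp, add_mul, Complex.mul_conj, Complex.normSq_eq_norm_sq]
  have hyv : ‖y * (starRingEnd ℂ) v‖ = ‖y‖ * ‖v‖ := by simp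
  have hre : 0 < p.re := by
    have := Complex.abs_re_le_norm (y * (starRingEnd ℂ) v)
    rw [hyv] at this
    have h2 := neg_abs_le (y * (starRingEnd ℂ) v).re
    rw [hpe, Complex.add_re, Complex.ofReal_re]
    nlinarith [norm_nonneg y]
  have him : |p.im| ≤ ‖y‖ * ‖v‖ := by
    rw [hpe, Complex.add_im, Complex.ofReal_im, zero_add, ← hyv]
    exact Complex.abs_im_le_norm _
  have harg : |p.arg| ≤ Real.pi / 2 := Complex.abs_arg_le_pi_div_two_iff.2 hre.le
  have hs := Real.mul_abs_le_abs_sin harg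
  have hsin : |Real.sin p.arg| ≤ 2 * ‖y‖ / ‖v‖ := by
    rw [Complex.sin_arg, abs_div, abs_norm]
    have : ‖p‖ = ‖v + y‖ * ‖v‖ := by simp [hp]
    rw [this, div_le_div_iff₀ (by positivity) hv]
    calc |p.im| * ‖v‖ ≤ (‖y‖ * ‖v‖) * ‖v‖ := by gcongr
      _ = 2 * ‖y‖ * (‖v‖ / 2 * ‖v‖) := by ring
      _ ≤ _ := by gcongr
  show |p.arg| ≤ _
  have h3 := hs.trans hsin
  have hpi := Real.pi_pos
  calc |p.arg| = Real.pi / 2 * (2 / Real.pi * |p.arg|) := by field_simp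
    _ ≤ Real.pi / 2 * (2 * ‖y‖ / ‖v‖) := by gcongr
    _ = _ := by ring

lemma an_meas (y : ℝ × ℝ) : Measurable (fun x => an (zc x) (zc (x + y))) := by
  unfold an
  have := zc_meas
  apply Complex.measurable_arg.comp
  apply Measurable.mul
  · exact zc_meas.comp (measurable_id.add_const y)
  · exact (Complex.continuous_conj.measurable).comp zc_meas

lemma G_int (y : ℝ × ℝ) : Integrable (fun x => gs (an (zc x) (zc (x + y)))) := by
  set Y := ‖zc y‖ with hY
  set R := 2 * Y + 1 with hR
  have hY0 : 0 ≤ Y := norm_nonneg _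
  have hint : Integrable (fun x : ℝ × ℝ =>
      (5 * (1 + R) ^ 3 + (2 * Real.pi * Y) ^ 3) * (1 + ‖x‖) ^ (-(3:ℝ))) := by
    apply Integrable.const_mul
    apply integrable_one_add_norm
    simp; norm_num
  refine hint.mono' ?_ ?_
  · apply Measurable.aestronglyMeasurable
    unfold gs
    exact (an_meas y).sub (Real.measurable_sin.comp (an_meas y))
  · refine Filter.Eventually.of_forall fun x => ?_
    have hx0 := norm_nonneg x
    have hpi := Real.pi_pos
    have e : (1 + ‖x‖) ^ (-(3:ℝ)) = ((1 + ‖x‖) ^ 3)⁻¹ := by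
      rw [Real.rpow_neg (by positivity)]; norm_cast
    rw [e, Real.norm_eq_abs, ← div_eq_mul_inv, le_div_iff₀ (by positivity)]
    rcases le_or_gt ‖x‖ R with h | h
    · have h1 : |gs (an (zc x) (zc (x + y)))| ≤ 5 := gs_bound' _ (Complex.abs_arg_le_pi _)
      calc _ ≤ 5 * (1 + R) ^ 3 := by gcongr
        _ ≤ _ := by
          have : 0 ≤ (2 * Real.pi * Y) ^ 3 := by positivity
          linarith
    · have hxz := norm_le_zc x
      have h2 := an_bound (zc x) (zc y) (by linarith)
      rw [← zc_add] at h2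
      have h3 : |an (zc x) (zc (x + y))| * (1 + ‖x‖) ≤ 2 * Real.pi * Y := by
        have hz : 0 < ‖zc x‖ := by linarith
        calc _ ≤ Real.pi * ‖zc y‖ / ‖zc x‖ * (2 * ‖zc x‖) := by gcongr; linarith
          _ = _ := by rw [← hY]; field_simp
      calc _ ≤ |an (zc x) (zc (x + y))| ^ 3 * (1 + ‖x‖) ^ 3 := by gcongr; exact gs_bound _
        _ = (|an (zc x) (zc (x + y))| * (1 + ‖x‖)) ^ 3 := by ring
        _ ≤ (2 * Real.pi * Y) ^ 3 := by gcongr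
        _ ≤ _ := by
          have : 0 ≤ 5 * (1 + R) ^ 3 := by positivity
          linarith

lemma cross_im (v w : ℝ × ℝ) : (zc w * (starRingEnd ℂ) (zc v)).im = v.1 * w.2 - v.2 * w.1 := by
  simp [zc_re, zc_im]; ring

lemma line_null (y : ℝ × ℝ) (hy : y ≠ 0) : ∀ᵐ x : ℝ × ℝ, x.1 * y.2 - x.2 * y.1 ≠ 0 := by
  let φ : ℝ × ℝ →ₗ[ℝ] ℝ := y.2 • LinearMap.fst ℝ ℝ ℝ - y.1 • LinearMap.snd ℝ ℝ ℝ
  have := Measure.addHaar_submodule (volume : Measure (ℝ × ℝ)) (LinearMap.ker φ) (by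
    intro h
    apply hy
    rw [LinearMap.ker_eq_top] at h
    have h1 := LinearMap.congr_fun h (1, 0)
    have h2 := LinearMap.congr_fun h (0, 1)
    simp [φ] at h1 h2
    ext <;> simp [h1, h2])
  rw [ae_iff]
  convert this using 2
  ext x
  simp [φ, mul_comm]

lemma ae_ne_pi (y : ℝ × ℝ) : ∀ᵐ x : ℝ × ℝ, an (zc x) (zc (x + y)) ≠ Real.pi := by
  by_cases hy : y = 0
  · refine Filter.Eventually.of_forall fun x => ?_
    simp only [hy, add_zero, an, Complex.mul_conj]
    rw [Complex.arg_ofReal_of_nonneg (Complex.normSq_nonneg _)]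
    exact Real.pi_pos.ne
  · filter_upwards [line_null y hy] with x hx h
    apply hx
    have := (Complex.arg_eq_pi_iff.1 h).2
    rw [cross_im] at this
    simp at this
    linarith

lemma an_symm (v w : ℂ) (h : an v w ≠ Real.pi) : an w v = - an v w := by
  unfold an at *
  have : v * (starRingEnd ℂ) w = (starRingEnd ℂ) (w * (starRingEnd ℂ) v) := by simp [mul_comm]
  rw [this, Complex.arg_conj, if_neg h]

lemma G_zero (y : ℝ × ℝ) : ∫ x, gs (an (zc x) (zc (x + y))) = 0 := by
  have h := integral_sub_left_eq_self (fun x => gs (an (zc x) (zc (x + y)))) (volume : Measure (ℝ × ℝ)) (-y)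
  have h2 : ∫ x, gs (an (zc (-y - x)) (zc (-y - x + y))) = ∫ x, - gs (an (zc x) (zc (x + y))) := by
    apply integral_congr_ae
    filter_upwards [ae_ne_pi y] with x hx
    have e1 : -y - x = -(x + y) := by abel
    have e2 : -y - x + y = -x := by abel
    have e3 : an (-zc (x+y)) (-zc x) = an (zc (x+y)) (zc x) := by simp [an]
    rw [e2, e1, zc_neg, zc_neg, e3, an_symm _ _ hx]
    unfold gs; rw [Real.sin_neg]; ring
  rw [integral_neg] at h2
  linarith

lemma G_int' (a b : ℝ × ℝ) : Integrable (fun x => gs (an (zc (x + a)) (zc (x + b)))) := by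
  have := (G_int (b - a)).comp_add_right a
  convert this using 4
  abel_nf

lemma G_zero' (a b : ℝ × ℝ) : ∫ x, gs (an (zc (x + a)) (zc (x + b))) = 0 := by
  rw [← G_zero (b - a), ← integral_add_right_eq_self (fun x => gs (an (zc x) (zc (x + (b - a))))) a]
  congr 1; funext x
  rw [show x + a + (b - a) = x + b by abel]

lemma ae_ne_pi' (a b : ℝ × ℝ) : ∀ᵐ x : ℝ × ℝ, an (zc (x + a)) (zc (x + b)) ≠ Real.pi := by
  have := (measurePreserving_add_right (volume : Measure (ℝ × ℝ)) a).quasiMeasurePreserving.ae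
    (ae_ne_pi (b - a))
  filter_upwards [this] with x hx
  rwa [show x + a + (b - a) = x + b by abel] at hx

/-- positively oriented region -/
def Tp (a b : ℝ × ℝ) : Set (ℝ × ℝ) :=
  {x | 0 < x.1 * a.2 - x.2 * a.1 ∧ 0 < b.1 * x.2 - b.2 * x.1 ∧
    (x.1 * a.2 - x.2 * a.1) + (b.1 * x.2 - b.2 * x.1) < a.1 * b.2 - a.2 * b.1}

lemma tri_vol (D : ℝ) (hD : 0 ≤ D) : volume {p : ℝ × ℝ | 0 < p.1 ∧ 0 < p.2 ∧ p.1 + p.2 < D}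
    = ENNReal.ofReal (D ^ 2 / 2) := by
  have : {p : ℝ × ℝ | 0 < p.1 ∧ 0 < p.2 ∧ p.1 + p.2 < D}
      = regionBetween (fun _ => 0) (fun x => D - x) (Set.Ioo 0 D) := by
    ext p
    simp only [regionBetween, Set.mem_ofPred_eq, Set.mem_Ioo]
    constructor
    · rintro ⟨h1, h2, h3⟩; exact ⟨⟨h1, by linarith⟩, h2, by linarith⟩
    · rintro ⟨⟨h1, _⟩, h2, h3⟩; exact ⟨h1, h2, by linarith⟩
  rw [this]
  have h := volume_regionBetween_eq_integral (μ := (volume : Measure ℝ)) (f := fun _ => (0:ℝ))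
    (g := fun x => D - x) (s := Set.Ioo 0 D) (by simp)
    ((Continuous.integrableOn_Icc (a := 0) (b := D) (by fun_prop)).mono_set Set.Ioo_subset_Icc_self)
    measurableSet_Ioo (fun x hx => by simpa using hx.2.le)
  rw [← Measure.volume_eq_prod] at h
  rw [h, ← integral_Ioc_eq_integral_Ioo, ← intervalIntegral.integral_of_le hD]
  congr 1
  simp only [Pi.sub_apply, sub_zero]
  rw [intervalIntegral.integral_sub (by simp) (by simp)]
  simp
  ring

lemma Tp_empty (a b : ℝ × ℝ) (h : a.1 * b.2 - a.2 * b.1 ≤ 0) : Tp a b = ∅ := by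
  ext x; simp only [Tp, Set.mem_ofPred_eq, Set.mem_empty_iff_false, iff_false]
  rintro ⟨h1, h2, h3⟩; linarith

lemma Tp_meas (a b : ℝ × ℝ) : MeasurableSet (Tp a b) := by
  unfold Tp
  apply IsOpen.measurableSet
  exact IsOpen.and (isOpen_lt (by fun_prop) (by fun_prop))
    (IsOpen.and (isOpen_lt (by fun_prop) (by fun_prop)) (isOpen_lt (by fun_prop) (by fun_prop)))

lemma Tp_vol (a b : ℝ × ℝ) : volume (Tp a b) = ENNReal.ofReal ((a.1 * b.2 - a.2 * b.1) / 2) := by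
  rcases le_or_gt (a.1 * b.2 - a.2 * b.1) 0 with h | h
  · rw [Tp_empty a b h, ENNReal.ofReal_of_nonpos (by linarith)]; simp
  set D := a.1 * b.2 - a.2 * b.1 with hD
  let M : Matrix (Fin 2) (Fin 2) ℝ := !![a.2, -a.1; -b.2, b.1]
  let φ : ℝ × ℝ →ₗ[ℝ] ℝ × ℝ := Matrix.toLin (Module.Basis.finTwoProd ℝ) (Module.Basis.finTwoProd ℝ) M
  have hφ : ∀ x, φ x = (x.1 * a.2 - x.2 * a.1, b.1 * x.2 - b.2 * x.1) := by
    intro x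
    have := Matrix.toLin_finTwoProd_apply a.2 (-a.1) (-b.2) b.1 x
    simp only [φ, M, this]
    ext <;> simp <;> ring
  have hdet : LinearMap.det φ = - D := by
    simp only [φ, LinearMap.det_toLin, M, Matrix.det_fin_two_of, hD]; ring
  have := Measure.addHaar_preimage_linearMap (volume : Measure (ℝ × ℝ)) (f := φ)
    (by rw [hdet]; linarith) {p : ℝ × ℝ | 0 < p.1 ∧ 0 < p.2 ∧ p.1 + p.2 < D}
  rw [tri_vol D h.le, hdet, ← ENNReal.ofReal_mul (by positivity)] at this
  convert this using 2
  · ext x; simp [Tp, hφ, hD]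
  · rw [abs_inv, abs_neg, abs_of_pos h]; field_simp

lemma an_pos_iff (v w : ℝ × ℝ) (h : an (zc v) (zc w) ≠ Real.pi) :
    0 < an (zc v) (zc w) ↔ 0 < v.1 * w.2 - v.2 * w.1 := by
  rw [← cross_im]
  unfold an at *
  constructor
  · intro h0
    have h1 := Complex.arg_nonneg_iff.1 h0.le
    refine lt_of_le_of_ne h1 fun h2 => ?_
    rcases Complex.arg_nonneg_iff.1 h0.le |>.eq_or_lt with _ | h3
    · rcases le_or_gt 0 (zc w * (starRingEnd ℂ) (zc v)).re with h4 | h4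
      · exact h0.ne' (Complex.arg_eq_zero_iff.2 ⟨h4, h2.symm⟩)
      · exact h (Complex.arg_eq_pi_iff.2 ⟨h4, h2.symm⟩)
    · exact h3.ne h2
  · intro h0
    refine lt_of_le_of_ne (Complex.arg_nonneg_iff.2 h0.le) fun h2 => ?_
    exact h0.ne' (Complex.arg_eq_zero_iff.1 h2.symm).2

lemma sum_mult (p q r : ℂ) (hp : p ≠ 0) (hq : q ≠ 0) (hr : r ≠ 0) :
    ∃ k : ℤ, an p q + an q r + an r p = 2 * Real.pi * k := by
  have e : ((an p q + an q r + an r p : ℝ) : Real.Angle) = ((0 : ℝ) : Real.Angle) := by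
    have cp : (starRingEnd ℂ) p ≠ 0 := by simpa using hp
    have cq : (starRingEnd ℂ) q ≠ 0 := by simpa using hq
    have cr : (starRingEnd ℂ) r ≠ 0 := by simpa using hr
    unfold an
    rw [Real.Angle.coe_add, Real.Angle.coe_add, ← Complex.arg_mul_coe_angle (by simp [*]) (by simp [*]),
      ← Complex.arg_mul_coe_angle (by simp [*]) (by simp [*])]
    have : q * (starRingEnd ℂ) p * (r * (starRingEnd ℂ) q) * (p * (starRingEnd ℂ) r)
        = ((Complex.normSq p * Complex.normSq q * Complex.normSq r : ℝ) : ℂ) := by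
      push_cast
      simp only [← Complex.mul_conj]; ring
    rw [this, Complex.arg_ofReal_of_nonneg]
    have := Complex.normSq_nonneg
    exact mul_nonneg (mul_nonneg (this _) (this _)) (this _)
  obtain ⟨k, hk⟩ := Real.Angle.angle_eq_iff_two_pi_dvd_sub.1 e
  exact ⟨k, by simpa using hk⟩

/-- combinatorial step -/
lemma sum_val (α β γ : ℝ) (k : ℤ) (hk : α + β + γ = 2 * Real.pi * k)
    (a1 : -Real.pi < α) (a2 : α < Real.pi) (b1 : -Real.pi < β) (b2 : β < Real.pi)
    (c1 : -Real.pi < γ) (c2 : γ < Real.pi) :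
    α + β + γ = (if 0 < α ∧ 0 < γ ∧ 0 < β then 2 * Real.pi else 0)
      - (if α < 0 ∧ γ < 0 ∧ β < 0 then 2 * Real.pi else 0) := by
  have hpi := Real.pi_pos
  have k1 : (k : ℝ) < 2 := by nlinarith
  have k2 : (-2 : ℝ) < k := by nlinarith
  have k1' : k < 2 := by exact_mod_cast k1
  have k2' : -2 < k := by exact_mod_cast k2
  have : k = -1 ∨ k = 0 ∨ k = 1 := by omega
  rcases this with rfl | rfl | rfl <;> push_cast at hk
  · rw [if_neg (by rintro ⟨_, _, _⟩; linarith), if_pos ⟨by linarith, by linarith, by linarith⟩]; linarith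
  · rw [if_neg (by rintro ⟨_, _, _⟩; linarith), if_neg (by rintro ⟨_, _, _⟩; linarith)]; linarith
  · rw [if_pos ⟨by linarith, by linarith, by linarith⟩, if_neg (by rintro ⟨_, _, _⟩; linarith)]; linarith

lemma ae_ne_zero (a : ℝ × ℝ) : ∀ᵐ x : ℝ × ℝ, zc (x + a) ≠ 0 := by
  have : ∀ᵐ x : ℝ × ℝ, x ≠ -a := by
    rw [ae_iff]; simp
  filter_upwards [this] with x hx h
  exact hx (eq_neg_of_add_eq_zero_left (zc_eq_zero.1 h))

lemma S_ae (a b : ℝ × ℝ) : ∀ᵐ x : ℝ × ℝ,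
    an (zc (x + 0)) (zc (x + a)) + an (zc (x + a)) (zc (x + b)) + an (zc (x + b)) (zc (x + 0))
     = (Tp a b).indicator (fun _ => 2 * Real.pi) x - (Tp b a).indicator (fun _ => 2 * Real.pi) x := by
  filter_upwards [ae_ne_zero 0, ae_ne_zero a, ae_ne_zero b, ae_ne_pi' 0 a, ae_ne_pi' a b, ae_ne_pi' b 0,
    ae_ne_pi' a 0, ae_ne_pi' b a, ae_ne_pi' 0 b]
    with x n0 na nb p1 p2 p3 q1 q2 q3
  obtain ⟨k, hk⟩ := sum_mult _ _ _ n0 na nb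
  have lt : ∀ v w, an v w ≠ Real.pi → an v w < Real.pi := fun v w h =>
    lt_of_le_of_ne (Complex.arg_le_pi _) h
  have gt : ∀ v w, - Real.pi < an v w := fun v w => Complex.neg_pi_lt_arg _
  rw [sum_val _ _ _ k hk (gt _ _) (lt _ _ p1) (gt _ _) (lt _ _ p2) (gt _ _) (lt _ _ p3)]
  have neg : ∀ v w, an v w ≠ Real.pi → (an v w < 0 ↔ 0 < an w v) := fun v w h => by
    rw [an_symm _ _ h]; constructor <;> intro <;> linarith
  simp only [neg _ _ p1, neg _ _ p2, neg _ _ p3, an_pos_iff _ _ p1, an_pos_iff _ _ p2, an_pos_iff _ _ p3,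
    an_pos_iff _ _ q1, an_pos_iff _ _ q2, an_pos_iff _ _ q3]
  classical
  rw [Set.indicator_apply, Set.indicator_apply]
  congr 2
  · simp only [Tp, Set.mem_ofPred_eq, Prod.fst_add, Prod.snd_add, Prod.fst_zero, Prod.snd_zero, eq_iff_iff]
    refine and_congr ?_ (and_congr ?_ ?_) <;> constructor <;> intro <;> linarith
  · simp only [Tp, Set.mem_ofPred_eq, Prod.fst_add, Prod.snd_add, Prod.fst_zero, Prod.snd_zero, eq_iff_iff]
    rw [and_left_comm]
    refine and_congr ?_ (and_congr ?_ ?_) <;> constructor <;> intro <;> linarith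

lemma Tp_int (a b : ℝ × ℝ) : Integrable ((Tp a b).indicator (fun _ => 2 * Real.pi)) := by
  rw [integrable_indicator_iff (Tp_meas a b)]
  apply integrableOn_const
  · rw [Tp_vol]; exact ENNReal.ofReal_ne_top
  · exact enorm_ne_top
  

lemma Tp_integral (a b : ℝ × ℝ) : ∫ x, (Tp a b).indicator (fun _ => 2 * Real.pi) x =
    Real.pi * max (a.1 * b.2 - a.2 * b.1) 0 := by
  rw [integral_indicator (Tp_meas a b), setIntegral_const, Measure.real, Tp_vol,
    ENNReal.toReal_ofReal', smul_eq_mul]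
  rcases le_total (a.1 * b.2 - a.2 * b.1) 0 with h | h
  · rw [max_eq_right h, max_eq_right (by linarith)]; ring
  · rw [max_eq_left h, max_eq_left (by linarith)]; ring

lemma alg (a b c a' b' c' : ℂ) (ha : a * a' = 1) (hb : b * b' = 1) (hc : c * c' = 1) :
    (1 - a * b') * (1 - b * c') * (1 - c * a') =
      (b * a' - a * b') + (c * b' - b * c') + (a * c' - c * a') := by
  linear_combination (c * b' - b * b' * c * c') * ha + (a * c' - c * c') * hb + (b * a' - 1) * hc

lemma phase_sin (v w : ℂ) (hv : v ≠ 0) (hw : w ≠ 0) :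
    (w / ‖w‖) * (starRingEnd ℂ) (v / ‖v‖) - (v / ‖v‖) * (starRingEnd ℂ) (w / ‖w‖)
      = 2 * Complex.I * (Real.sin (an v w) : ℝ) := by
  have e : (w / ‖w‖) * (starRingEnd ℂ) (v / ‖v‖) - (v / ‖v‖) * (starRingEnd ℂ) (w / ‖w‖)
    = (w * (starRingEnd ℂ) v - (starRingEnd ℂ) (w * (starRingEnd ℂ) v)) / (‖w * (starRingEnd ℂ) v‖ : ℝ) := by
    have : (‖v‖ : ℂ) ≠ 0 := by simpa using hv
    have : (‖w‖ : ℂ) ≠ 0 := by simpa using hw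
    simp only [map_div₀, map_mul, Complex.conj_conj, Complex.conj_ofReal, norm_mul, RCLike.norm_conj]
    push_cast
    field_simp
  rw [e, Complex.sub_conj, an, Complex.sin_arg]
  push_cast; ring

lemma phase_unit (v : ℂ) (hv : v ≠ 0) : (v / ‖v‖) * (starRingEnd ℂ) (v / ‖v‖) = 1 := by
  have : (‖v‖ : ℂ) ≠ 0 := by simpa using hv
  rw [Complex.mul_conj, Complex.normSq_eq_norm_sq]
  simp [hv]

/-- The geometric identity for the winding phase `u(x) = (x₁+ix₂)/|x₁+ix₂|` on `ℝ²`: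
for all `y₁, y₂ ∈ ℝ²`, the function
`x ↦ (1 − u(x)conj u(y₁+x))(1 − u(y₁+x)conj u(y₂+x))(1 − u(y₂+x)conj u(x))`
is integrable and its integral equals `2πi (y₁ ∧ y₂)`. -/
theorem winding_phase_integral (y₁ y₂ : ℝ × ℝ) :
    let u : ℝ × ℝ → ℂ := fun x =>
      ((x.1 : ℂ) + (x.2 : ℂ) * Complex.I) / ‖(x.1 : ℂ) + (x.2 : ℂ) * Complex.I‖
    let f : ℝ × ℝ → ℂ := fun x =>
      (1 - u x * (starRingEnd ℂ) (u (y₁ + x))) *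
        (1 - u (y₁ + x) * (starRingEnd ℂ) (u (y₂ + x))) *
        (1 - u (y₂ + x) * (starRingEnd ℂ) (u x))
    Integrable f ∧
      ∫ x : ℝ × ℝ, f x
        = 2 * Real.pi * Complex.I * ((y₁.1 * y₂.2 - y₁.2 * y₂.1 : ℝ) : ℂ) := by
  intro u f
  have hu : ∀ x, u x = zc x / ‖zc x‖ := fun x => rfl
  let S : ℝ × ℝ → ℝ := fun x =>
    (Tp y₁ y₂).indicator (fun _ => 2 * Real.pi) x - (Tp y₂ y₁).indicator (fun _ => 2 * Real.pi) x
  let G : ℝ × ℝ → ℝ := fun x => gs (an (zc (x + 0)) (zc (x + y₁))) +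
    gs (an (zc (x + y₁)) (zc (x + y₂))) + gs (an (zc (x + y₂)) (zc (x + 0)))
  have hS : Integrable S := (Tp_int _ _).sub (Tp_int _ _)
  have hG : Integrable G := ((G_int' _ _).add (G_int' _ _)).add (G_int' _ _)
  have hae : (fun x => 2 * Complex.I * ((S x - G x : ℝ) : ℂ)) =ᵐ[volume] f := by
    filter_upwards [S_ae y₁ y₂, ae_ne_zero 0, ae_ne_zero y₁, ae_ne_zero y₂] with x hx n0 n1 n2
    have hf : f x = (1 - u (x + 0) * (starRingEnd ℂ) (u (x + y₁))) *
        (1 - u (x + y₁) * (starRingEnd ℂ) (u (x + y₂))) *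
        (1 - u (x + y₂) * (starRingEnd ℂ) (u (x + 0))) := by
      simp only [f, add_comm _ x, add_zero]
    rw [hf]
    simp only [hu]
    rw [alg _ _ _ _ _ _ (phase_unit _ n0) (phase_unit _ n1) (phase_unit _ n2),
      phase_sin _ _ n0 n1, phase_sin _ _ n1 n2, phase_sin _ _ n2 n0]
    have : S x - G x = Real.sin (an (zc (x + 0)) (zc (x + y₁))) +
      Real.sin (an (zc (x + y₁)) (zc (x + y₂))) + Real.sin (an (zc (x + y₂)) (zc (x + 0))) := by
      simp only [S, ← hx, G, gs]; ring
    rw [this]; push_cast; ring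
  have hI : Integrable (fun x => 2 * Complex.I * ((S x - G x : ℝ) : ℂ)) :=
    ((hS.sub hG).ofReal).const_mul _
  refine ⟨hI.congr hae, ?_⟩
  rw [← integral_congr_ae hae, integral_const_mul, integral_complex_ofReal, integral_sub hS hG]
  have iG : ∫ x, G x = 0 := by
    simp only [G]
    have h12 : Integrable (fun x => gs (an (zc (x + 0)) (zc (x + y₁))) +
      gs (an (zc (x + y₁)) (zc (x + y₂)))) := (G_int' _ _).add (G_int' _ _)
    rw [integral_add h12 (G_int' _ _), integral_add (G_int' _ _) (G_int' _ _),
      G_zero', G_zero', G_zero']; simp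
  have iS : ∫ x, S x = Real.pi * (y₁.1 * y₂.2 - y₁.2 * y₂.1) := by
    simp only [S]
    rw [integral_sub (Tp_int _ _) (Tp_int _ _), Tp_integral, Tp_integral]
    have e : y₂.1 * y₁.2 - y₂.2 * y₁.1 = -(y₁.1 * y₂.2 - y₁.2 * y₂.1) := by ring
    rw [e]
    rcases le_total (y₁.1 * y₂.2 - y₁.2 * y₂.1) 0 with h | h
    · rw [max_eq_right h, max_eq_left (by linarith)]; ring
    · rw [max_eq_left h, max_eq_right (by linarith)]; ring
  rw [iG, iS]; push_cast; ring
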